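/- Let S = (Q × X, V × U, ⇝) be a deterministic discrete-time control hybrid system with cost function c, and let Q be a Bellman-like Q-function of S with cost c, defined on input tuples of length k and extended to longer tuples by the recursion Q(s, (w_1, …, w_m)) = c(s, w_1) + max_{s' ∈ Post_{w_1}(s)} Q(s', (w_2, …, w_m)). Let Q' be a Q-function on input tuples of length k, extended by the same recursion, such that Q'(s, (w_1, …, w_k)) ≤ T_c Q(s, (w_1, …, w_k)) for all states s and all length-k input tuples, where T_c Q(s, (w_1, …, w_k)) = inf_{w' ∈ V × U} Q(s, (w_1, …, w_k, w')). Then the pointwise maximum max(Q, Q') is a Bellman-like Q-function of S with cost c. -/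

import Mathlib

/-!
The recursion only prepends a cost and takes a supremum, both of which are monotone. An inequality
`Q(s, (w₁, …, w_k)) ≤ Q(s, (w₁, …, w_k, w'))` between base tuples and their one-step extensions
therefore propagates to longer tuples, so `Q` is Bellman-like if and only if `Q ≤ T_c Q` on tuples
of length `k`. For the same reason `T_c` is monotone, and on such tuples
`max(Q, Q') ≤ T_c Q ≤ T_c max(Q, Q')`.
-/

/-- A deterministic system: `Post_w(s)` is empty or a singleton. -/
def IsDeterministic {X U : Type*} (tr : X → U → X → Prop) : Prop :=
  ∀ x u y y', tr x u y → tr x u y' → y = y'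

/-- Extension of a Q-function `Qb`, defined on input tuples of length `k`, to longer
tuples via the recursion
`Q(s, (w₁, …, w_m)) = c(s, w₁) + sup_{s' ∈ Post_{w₁}(s)} Q(s', (w₂, …, w_m))`. -/
noncomputable def extQ {X U : Type*} (tr : X → U → X → Prop) (c : X → U → ℝ) (k : ℕ)
    (Qb : X → List U → EReal) : X → List U → EReal
  | s, [] => Qb s []
  | s, w :: ws =>
    if (w :: ws).length ≤ k then Qb s (w :: ws)
    else (c s w : EReal) + ⨆ s' ∈ {y | tr s w y}, extQ tr c k Qb s' ws

section QFunction

variable {X U : Type*} {tr : X → U → X → Prop} {c : X → U → ℝ} {k : ℕ}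
  {Qb Qb' : X → List U → EReal}

/-- A Bellman-like Q-function: appending inputs to a tuple does not decrease the value. The shorter
tuple is encoded as a prefix `ws.take j`. Only tuples of length at least `k` are compared, since the
values of `Qb` on shorter tuples are not part of the Q-function. -/
def IsBellmanLike (tr : X → U → X → Prop) (c : X → U → ℝ) (k : ℕ)
    (Qb : X → List U → EReal) : Prop :=
  ∀ (s : X) (ws : List U) (j : ℕ), k ≤ j → j ≤ ws.length →
    extQ tr c k Qb s (ws.take j) ≤ extQ tr c k Qb s ws

/-- The Bellman operator `T_c`, which takes the infimum over one further input appended to the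
tuple. Like `Qb`, its result is meant to be read on tuples of length `k`. -/
noncomputable def bellmanOp (tr : X → U → X → Prop) (c : X → U → ℝ) (k : ℕ)
    (Qb : X → List U → EReal) (s : X) (ws : List U) : EReal :=
  ⨅ w' : U, extQ tr c k Qb s (ws ++ [w'])

theorem extQ_of_length_le (s : X) {ws : List U} (h : ws.length ≤ k) :
    extQ tr c k Qb s ws = Qb s ws := by
  cases ws with
  | nil => rw [extQ]
  | cons w ws => rw [extQ, if_pos h]

theorem extQ_cons_of_le_length (s : X) (w : U) {ws : List U} (h : k ≤ ws.length) :
    extQ tr c k Qb s (w :: ws) = c s w + ⨆ s' ∈ {y | tr s w y}, extQ tr c k Qb s' ws := by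
  rw [extQ, List.length_cons, if_neg (Nat.lt_add_one_of_le h).not_ge]

theorem extQ_cons_le_extQ_cons (s : X) (w : U) {ws ws' : List U}
    (hws : k ≤ ws.length) (hws' : k ≤ ws'.length)
    (h : ∀ s', extQ tr c k Qb s' ws ≤ extQ tr c k Qb' s' ws') :
    extQ tr c k Qb s (w :: ws) ≤ extQ tr c k Qb' s (w :: ws') := by
  rw [extQ_cons_of_le_length s w hws, extQ_cons_of_le_length s w hws']
  exact add_le_add_right (iSup₂_mono fun s' _ => h s') _

theorem extQ_mono : Monotone (extQ tr c k) := by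
  intro Qb Qb' h s ws
  induction ws generalizing s with
  | nil => simpa only [extQ] using h s []
  | cons w ws ih =>
    rcases le_or_gt (w :: ws).length k with hle | hlt
    · simpa only [extQ_of_length_le s hle] using h s (w :: ws)
    · have hws : k ≤ ws.length := Nat.le_of_lt_succ hlt
      exact extQ_cons_le_extQ_cons s w hws hws ih

theorem bellmanOp_mono : Monotone (bellmanOp tr c k) :=
  fun _ _ h s ws => iInf_mono fun w' => extQ_mono h s (ws ++ [w'])

theorem extQ_le_extQ_append_singleton
    (h : ∀ s ws, ws.length = k → Qb s ws ≤ bellmanOp tr c k Qb s ws)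
    (s : X) {ws : List U} (hws : k ≤ ws.length) (w' : U) :
    extQ tr c k Qb s ws ≤ extQ tr c k Qb s (ws ++ [w']) := by
  induction ws generalizing s with
  | nil =>
    rw [extQ_of_length_le s (Nat.zero_le k)]
    exact (h s [] (Nat.le_zero.mp hws).symm).trans (iInf_le _ w')
  | cons w ws ih =>
    rcases hws.eq_or_lt with heq | hlt
    · rw [extQ_of_length_le s heq.ge]
      exact (h s (w :: ws) heq.symm).trans (iInf_le _ w')
    · have hws' : k ≤ ws.length := Nat.le_of_lt_succ hlt
      have happend : k ≤ (ws ++ [w']).length :=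
        hws'.trans (List.sublist_append_left ws [w']).length_le
      exact extQ_cons_le_extQ_cons s w hws' happend fun s' => ih s' hws'

theorem extQ_le_extQ_append
    (h : ∀ s ws, ws.length = k → Qb s ws ≤ bellmanOp tr c k Qb s ws)
    (s : X) {ws : List U} (hws : k ≤ ws.length) (vs : List U) :
    extQ tr c k Qb s ws ≤ extQ tr c k Qb s (ws ++ vs) := by
  induction vs using List.reverseRecOn with
  | nil => rw [List.append_nil]
  | append_singleton vs v ih =>
    have happend : k ≤ (ws ++ vs).length := hws.trans (List.sublist_append_left ws vs).length_le
    rw [← List.append_assoc]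
    exact ih.trans (extQ_le_extQ_append_singleton h s happend v)

theorem isBellmanLike_iff_le_bellmanOp :
    IsBellmanLike tr c k Qb ↔ ∀ s ws, ws.length = k → Qb s ws ≤ bellmanOp tr c k Qb s ws := by
  constructor
  · rintro hQ s ws rfl
    refine le_iInf fun w' => ?_
    have hprefix := hQ s (ws ++ [w']) ws.length le_rfl (List.sublist_append_left ws [w']).length_le
    rwa [List.take_left, extQ_of_length_le s le_rfl] at hprefix
  · intro h s ws j hkj hj
    have htake : k ≤ (ws.take j).length := by rwa [List.length_take_of_le hj]
    simpa only [List.take_append_drop] using extQ_le_extQ_append h s htake (ws.drop j)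

theorem max_Q_isBellmanLike_general (hQ : IsBellmanLike tr c k Qb)
    (hQ' : ∀ s ws, ws.length = k → Qb' s ws ≤ bellmanOp tr c k Qb s ws) :
    IsBellmanLike tr c k (Qb ⊔ Qb') := by
  rw [isBellmanLike_iff_le_bellmanOp] at hQ ⊢
  intro s ws hws
  calc
    (Qb ⊔ Qb') s ws ≤ bellmanOp tr c k Qb s ws := max_le (hQ s ws hws) (hQ' s ws hws)
    _ ≤ bellmanOp tr c k (Qb ⊔ Qb') s ws := bellmanOp_mono le_sup_left s ws

end QFunction

/-- For a deterministic discrete-time control hybrid system, if `Q` (given by a base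
function `Qb` on length-`k` tuples, extended by the recursion) is a Bellman-like
Q-function with cost `c`, and `Q'(s, (w₁,…,w_k)) ≤ T_c Q(s, (w₁,…,w_k)) =
inf_{w'} Q(s, (w₁,…,w_k,w'))` for all states and length-`k` tuples, then the pointwise
maximum `max(Q, Q')` is a Bellman-like Q-function of the system with cost `c`. -/
theorem max_Q_isBellmanLike {Qd X Vd U : Type*} [Finite Qd] [Finite Vd]
    (tr : (Qd × X) → (Vd × U) → (Qd × X) → Prop) (hdet : IsDeterministic tr)
    (c : (Qd × X) → (Vd × U) → ℝ) (k : ℕ)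
    (Qb Qb' : (Qd × X) → List (Vd × U) → EReal)
    (hQ : ∀ (s : Qd × X) (ws : List (Vd × U)) (j : ℕ), k ≤ j → j ≤ ws.length →
      extQ tr c k Qb s (ws.take j) ≤ extQ tr c k Qb s ws)
    (hQ' : ∀ (s : Qd × X) (ws : List (Vd × U)), ws.length = k →
      Qb' s ws ≤ ⨅ w' : Vd × U, extQ tr c k Qb s (ws ++ [w'])) :
    ∀ (s : Qd × X) (ws : List (Vd × U)) (j : ℕ), k ≤ j → j ≤ ws.length →
      extQ tr c k (fun s ws => max (Qb s ws) (Qb' s ws)) s (ws.take j) ≤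
        extQ tr c k (fun s ws => max (Qb s ws) (Qb' s ws)) s ws :=
  max_Q_isBellmanLike_general hQ hQ'
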